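/- Assume the ground truth reward r_G satisfies the reward structure assumption, the initial parameters θ_0 satisfy the initial policy assumption (general-features case), and the feature vectors satisfy the negative-inner-product feature assumption. Let ε ∈ (0, Δ1), and suppose θ_t is the gradient flow maximizing V_G. Set α := −s / (26(‖φ(y_med)‖² − s/2)) ∈ (0, 1/13) and K := (26/r_G(y_med)²)^{13α/7} · (1 + ‖φ(y_med)‖² π_{θ_0}(y_med)² / (8(‖φ(y_⋆)‖² − s) A_G(y_⋆; θ_0))). Then any time t with V_G(θ_t) ≥ r_G(y_⋆) − ε satisfies t ≥ [r_G(y_med) · M'^{14/13 + α} · (1 − e^{−2(Δ1 − ε)})] / [4 B² (Δ1 + Δ2) K] · π_{θ_0}(y_⋆)^{−14/13 − α}. -/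

import Mathlib

open scoped BigOperators RealInnerProductSpace

noncomputable def policy {Y : Type*} [Fintype Y] {D : ℕ}
    (φ : Y → EuclideanSpace ℝ (Fin D)) (θ : EuclideanSpace ℝ (Fin D)) (y : Y) : ℝ :=
  Real.exp ⟪φ y, θ⟫ / ∑ z, Real.exp ⟪φ z, θ⟫

noncomputable def expReward {Y : Type*} [Fintype Y] {D : ℕ}
    (φ : Y → EuclideanSpace ℝ (Fin D)) (r : Y → ℝ) (θ : EuclideanSpace ℝ (Fin D)) : ℝ :=
  ∑ y, policy φ θ y * r y

/-! Under gradient flow, every advantage decreases at the rate `‖∇V‖²`, and `V ≥ r(y_med)` means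
that the advantage `A` of `y_med` is at most zero. While `A` is at least a threshold `η`,
probability moves to `y_med` faster from `y_⋆` than from `Y_bad`: since `⟨φ(y_⋆), φ(y_med)⟩ ≤ 0`,
the logit of `y_⋆` gains almost nothing, and `π(y_⋆) / π(Y_bad) ^ κ` decreases for every
`κ ≤ 2/7`. By the time `A = η`, where `π(Y_bad)` is of order `η`, `π(y_⋆)` has thus dropped to some
`P ≲ π₀(y_⋆) η ^ κ`. From there on `π(y_⋆)` grows at most like the solution of `p' = C p²`, so it
needs a time of order `1 / P` to double, and as long as it has not, `‖∇V‖² ≲ (A + P)²` keeps `A`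
from reaching zero before a time of order `1 / P`. The lower bound follows on taking
`η = (π₀(y_⋆) / M') ^ (7/13)` and `κ = (1 + 13 α) / 7`. -/

section Comparison

variable {f f' g g' : ℝ → ℝ} {a b k : ℝ}

lemma le_two_mul_of_hasDerivAt_le_sq (hf : ∀ x ∈ Set.Icc a b, HasDerivAt f (f' x) x)
    (ha : 0 < f a) (hk : 0 ≤ k)
    (hf' : ∀ x ∈ Set.Icc a b, f x ≤ 2 * f a → f' x ≤ k * f x ^ 2)
    (hlen : 4 * k * f a * (b - a) < 1) {x : ℝ} (hx : x ∈ Set.Icc a b) : f x ≤ 2 * f a := by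
  have fence_le {x : ℝ} (hx : x ∈ Set.Icc a b) : f a + f a / (b - a) * (x - a) ≤ 2 * f a := by
    have : (x - a) / (b - a) ≤ 1 :=
      div_le_one_of_le₀ (by linarith [hx.2]) (by linarith [hx.1, hx.2])
    calc f a + f a / (b - a) * (x - a) = f a + f a * ((x - a) / (b - a)) := by ring
      _ ≤ f a + f a * 1 := by gcongr
      _ = 2 * f a := by ring
  refine le_trans ?_ (fence_le hx)
  refine image_le_of_deriv_right_lt_deriv_boundary
    (B := fun x => f a + f a / (b - a) * (x - a)) (B' := fun _ => f a / (b - a))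
    (fun x hx => (hf x hx).continuousAt.continuousWithinAt)
    (fun x hx => (hf x (Set.Ico_subset_Icc_self hx)).hasDerivWithinAt) (by simp)
    (fun x => by simpa using (((hasDerivAt_id x).sub_const a).const_mul _).const_add (f a))
    (fun x hx hfx => ?_) hx
  have hx' := Set.Ico_subset_Icc_self hx
  have hab : 0 < b - a := by linarith [hx.1, hx.2]
  have hfx_le : f x ≤ 2 * f a := hfx.le.trans (fence_le hx')
  have hfx_nonneg : 0 ≤ f x := by
    have : 0 ≤ x - a := by linarith [hx.1]
    rw [hfx]
    positivity
  calc f' x ≤ k * f x ^ 2 := hf' x hx' hfx_le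
    _ ≤ k * (2 * f a) ^ 2 := by gcongr
    _ = f a * (4 * k * f a * (b - a)) / (b - a) := by field_simp; ring
    _ < f a * 1 / (b - a) := by gcongr
    _ = f a / (b - a) := by rw [mul_one]

lemma antitoneOn_Icc_of_hasDerivAt_nonpos (hf : ∀ x ∈ Set.Icc a b, HasDerivAt f (f' x) x)
    (hf' : ∀ x ∈ Set.Icc a b, f' x ≤ 0) : AntitoneOn f (Set.Icc a b) :=
  antitoneOn_of_hasDerivWithinAt_nonpos (convex_Icc a b)
    (fun x hx => (hf x hx).continuousAt.continuousWithinAt)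
    (fun x hx => (hf x (interior_subset hx)).hasDerivWithinAt)
    (fun x hx => hf' x (interior_subset hx))

lemma inv_le_inv_add_of_neg_sq_le_hasDerivAt (hab : a ≤ b)
    (hf : ∀ x ∈ Set.Icc a b, HasDerivAt f (f' x) x) (hpos : ∀ x ∈ Set.Icc a b, 0 < f x)
    (hf' : ∀ x ∈ Set.Icc a b, -(k * f x ^ 2) ≤ f' x) :
    (f b)⁻¹ ≤ (f a)⁻¹ + k * (b - a) := by
  have hder (x) (hx : x ∈ Set.Icc a b) :
      HasDerivAt (fun x => (f x)⁻¹ - k * x) (-f' x / f x ^ 2 - k) x := by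
    simpa using ((hf x hx).fun_inv (hpos x hx).ne').fun_sub ((hasDerivAt_id x).const_mul k)
  have hanti : AntitoneOn (fun x => (f x)⁻¹ - k * x) (Set.Icc a b) :=
    antitoneOn_Icc_of_hasDerivAt_nonpos hder fun x hx => by
      rw [sub_nonpos, div_le_iff₀ (pow_pos (hpos x hx) 2)]
      linarith [hf' x hx]
  linarith [hanti (Set.left_mem_Icc.2 hab) (Set.right_mem_Icc.2 hab) hab]

lemma le_mul_div_rpow_of_logDeriv_le (hab : a ≤ b)
    (hf : ∀ x ∈ Set.Icc a b, HasDerivAt f (f' x) x) (hg : ∀ x ∈ Set.Icc a b, HasDerivAt g (g' x) x)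
    (hf0 : ∀ x ∈ Set.Icc a b, 0 < f x) (hg0 : ∀ x ∈ Set.Icc a b, 0 < g x)
    (hlog : ∀ x ∈ Set.Icc a b, f' x / f x - k * (g' x / g x) ≤ 0) :
    f b ≤ f a * (g b / g a) ^ k := by
  have ha := Set.left_mem_Icc.2 hab
  have hb := Set.right_mem_Icc.2 hab
  have hanti : AntitoneOn (fun x => Real.log (f x) - k * Real.log (g x)) (Set.Icc a b) :=
    antitoneOn_Icc_of_hasDerivAt_nonpos (fun x hx =>
      ((hf x hx).log (hf0 x hx).ne').sub (((hg x hx).log (hg0 x hx).ne').const_mul k)) hlog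
  have hratio := div_pos (hg0 b hb) (hg0 a ha)
  have hrpow := Real.rpow_pos_of_pos hratio k
  rw [← Real.log_le_log_iff (hf0 b hb) (mul_pos (hf0 a ha) hrpow),
    Real.log_mul (hf0 a ha).ne' hrpow.ne', Real.log_rpow hratio,
    Real.log_div (hg0 b hb).ne' (hg0 a ha).ne']
  linarith [hanti ha hb hab]

end Comparison

/-- The advantage `A_f(y; θ) = f y - E_{z ∼ π_θ} f z` of an output. Besides the reward, `f` will be
the velocity of the logits, so that `A_f` is then the logarithmic derivative of the policy. -/
noncomputable def advantage {Y : Type*} [Fintype Y] {D : ℕ} (φ : Y → EuclideanSpace ℝ (Fin D))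
    (f : Y → ℝ) (θ : EuclideanSpace ℝ (Fin D)) (y : Y) : ℝ :=
  f y - expReward φ f θ

/-- The probability `π_θ(S)` of a set of outputs. -/
noncomputable def policyMass {Y : Type*} [Fintype Y] {D : ℕ} (φ : Y → EuclideanSpace ℝ (Fin D))
    (θ : EuclideanSpace ℝ (Fin D)) (S : Finset Y) : ℝ :=
  ∑ y ∈ S, policy φ θ y

/-- The velocity `⟨φ(y), ∇V(θ)⟩` of the logit of `y` under gradient flow. -/
noncomputable def logitVelocity {Y : Type*} [Fintype Y] {D : ℕ}
    (φ : Y → EuclideanSpace ℝ (Fin D)) (r : Y → ℝ) (θ : EuclideanSpace ℝ (Fin D)) (y : Y) : ℝ :=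
  ⟪φ y, gradient (expReward φ r) θ⟫

/-- `θ` follows the gradient flow of the expected reward at the times in `T`. -/
def IsGradientFlowOn {Y : Type*} [Fintype Y] {D : ℕ} (φ : Y → EuclideanSpace ℝ (Fin D))
    (r : Y → ℝ) (θ : ℝ → EuclideanSpace ℝ (Fin D)) (T : Set ℝ) : Prop :=
  ∀ t ∈ T, HasDerivAt θ (gradient (expReward φ r) (θ t)) t

section Softmax

variable {Y : Type*} [Fintype Y] {D : ℕ} (φ : Y → EuclideanSpace ℝ (Fin D)) (r : Y → ℝ)
  (θ : EuclideanSpace ℝ (Fin D))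

section Nonempty

variable [Nonempty Y]

lemma sum_exp_inner_pos : 0 < ∑ z, Real.exp ⟪φ z, θ⟫ :=
  Finset.sum_pos (fun _ _ => Real.exp_pos _) Finset.univ_nonempty

lemma policy_pos (y : Y) : 0 < policy φ θ y :=
  div_pos (Real.exp_pos _) (sum_exp_inner_pos φ θ)

lemma policyMass_pos {S : Finset Y} (hS : S.Nonempty) : 0 < policyMass φ θ S :=
  Finset.sum_pos (fun y _ => policy_pos φ θ y) hS

lemma policy_le_policyMass {S : Finset Y} {y : Y} (hy : y ∈ S) :
    policy φ θ y ≤ policyMass φ θ S :=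
  Finset.single_le_sum (f := policy φ θ) (fun z _ => (policy_pos φ θ z).le) hy

lemma sum_policy : ∑ y, policy φ θ y = 1 := by
  simp only [policy]
  rw [← Finset.sum_div, div_self (sum_exp_inner_pos φ θ).ne']

lemma sum_policy_mul_advantage : ∑ y, policy φ θ y * advantage φ r θ y = 0 := by
  simp only [advantage, mul_sub, Finset.sum_sub_distrib, ← Finset.sum_mul, sum_policy, one_mul]
  exact sub_self _

-- `π_θ(y)` is the exponential of `⟨φ(y), θ⟩ - log Z(θ)`, and `∇ log Z` is the mean feature vector.
lemma hasGradientAt_policy (y : Y) :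
    HasGradientAt (fun θ => policy φ θ y)
      (policy φ θ y • (φ y - ∑ z, policy φ θ z • φ z)) θ := by
  have hlogit (z : Y) : HasFDerivAt (fun θ => ⟪φ z, θ⟫) (innerSL ℝ (φ z)) θ :=
    (innerSL ℝ (φ z)).hasFDerivAt
  have hlogZ := (HasFDerivAt.fun_sum (u := Finset.univ) fun z _ => (hlogit z).exp).log
    (sum_exp_inner_pos φ θ).ne'
  have hpolicy (θ) : policy φ θ y = Real.exp (⟪φ y, θ⟫ - Real.log (∑ z, Real.exp ⟪φ z, θ⟫)) := by
    rw [Real.exp_sub, Real.exp_log (sum_exp_inner_pos φ θ), policy]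
  rw [hasGradientAt_iff_hasFDerivAt, funext hpolicy]
  refine ((hlogit y).fun_sub hlogZ).exp.congr_fderiv ?_
  rw [← hpolicy θ]
  ext v
  simp [policy, Finset.mul_sum, div_eq_inv_mul, mul_assoc]

lemma hasGradientAt_expReward :
    HasGradientAt (expReward φ r) (∑ y, (policy φ θ y * advantage φ r θ y) • φ y) θ := by
  have h := HasFDerivAt.fun_sum (u := Finset.univ) fun y _ =>
    (hasGradientAt_policy φ θ y).hasFDerivAt.mul_const (r y)
  rw [hasGradientAt_iff_hasFDerivAt]
  refine h.congr_fderiv ?_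
  simp only [← map_smul, ← map_sum, advantage, mul_sub, sub_smul, smul_sub, smul_smul,
    Finset.sum_sub_distrib]
  congr 2
  · simp only [mul_comm]
  · simp only [mul_comm _ (expReward φ r θ), mul_smul, ← Finset.smul_sum]
    rw [expReward, Finset.sum_smul]
    simp only [mul_smul, smul_comm (r _)]

lemma gradient_expReward :
    gradient (expReward φ r) θ = ∑ y, (policy φ θ y * advantage φ r θ y) • φ y :=
  (hasGradientAt_expReward φ r θ).gradient

lemma logitVelocity_eq_sum (y : Y) :
    logitVelocity φ r θ y = ∑ z, policy φ θ z * advantage φ r θ z * ⟪φ y, φ z⟫ := by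
  simp only [logitVelocity, gradient_expReward, inner_sum, real_inner_smul_right]

lemma norm_gradient_expReward_le {B : ℝ} (hB : ∀ y, ‖φ y‖ ≤ B) :
    ‖gradient (expReward φ r) θ‖ ≤ B * ∑ y, policy φ θ y * |advantage φ r θ y| := by
  rw [gradient_expReward, Finset.mul_sum]
  refine norm_sum_le_of_le _ fun y _ => ?_
  rw [norm_smul, Real.norm_eq_abs, abs_mul, abs_of_pos (policy_pos φ θ y), mul_comm]
  have := policy_pos φ θ y
  gcongr
  exact hB y

end Nonempty

end Softmax

namespace IsGradientFlowOn

variable {Y : Type*} [Fintype Y] {D : ℕ} {φ : Y → EuclideanSpace ℝ (Fin D)}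
  {r : Y → ℝ} {θ : ℝ → EuclideanSpace ℝ (Fin D)} {T : Set ℝ} {t : ℝ}

lemma mono {T' : Set ℝ} (h : IsGradientFlowOn φ r θ T) (hT : T' ⊆ T) :
    IsGradientFlowOn φ r θ T' :=
  fun t ht => h t (hT ht)

variable [Nonempty Y]

lemma hasDerivAt_policy (h : IsGradientFlowOn φ r θ T) (ht : t ∈ T) (y : Y) :
    HasDerivAt (fun t => policy φ (θ t) y)
      (policy φ (θ t) y * advantage φ (logitVelocity φ r (θ t)) (θ t) y) t := by
  refine ((hasGradientAt_policy φ (θ t) y).hasFDerivAt.comp_hasDerivAt t (h t ht)).congr_deriv ?_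
  simp only [InnerProductSpace.toDual_apply_apply, real_inner_smul_left, inner_sub_left, sum_inner]
  rfl

lemma hasDerivAt_policyMass (h : IsGradientFlowOn φ r θ T) (ht : t ∈ T) (S : Finset Y) :
    HasDerivAt (fun t => policyMass φ (θ t) S)
      (∑ y ∈ S, policy φ (θ t) y * advantage φ (logitVelocity φ r (θ t)) (θ t) y) t :=
  HasDerivAt.fun_sum fun y _ => h.hasDerivAt_policy ht y

lemma hasDerivAt_advantage (h : IsGradientFlowOn φ r θ T) (ht : t ∈ T) (y : Y) :
    HasDerivAt (fun t => advantage φ r (θ t) y) (-‖gradient (expReward φ r) (θ t)‖ ^ 2) t := by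
  have hgrad := (hasGradientAt_expReward φ r (θ t)).differentiableAt.hasGradientAt
  refine ((hgrad.hasFDerivAt.comp_hasDerivAt t (h t ht)).const_sub (r y)).congr_deriv ?_
  rw [InnerProductSpace.toDual_apply_apply, real_inner_self_eq_norm_sq]

lemma antitoneOn_advantage {a b : ℝ} (h : IsGradientFlowOn φ r θ (Set.Icc a b)) (y : Y) :
    AntitoneOn (fun t => advantage φ r (θ t) y) (Set.Icc a b) :=
  antitoneOn_Icc_of_hasDerivAt_nonpos (fun _ ht => h.hasDerivAt_advantage ht y)
    fun _ _ => neg_nonpos.2 (sq_nonneg _)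

lemma exists_advantage_eq {a b η : ℝ} (h : IsGradientFlowOn φ r θ (Set.Icc a b)) (y : Y)
    (hab : a ≤ b) (hη : η ∈ Set.Icc (advantage φ r (θ b) y) (advantage φ r (θ a) y)) :
    ∃ T ∈ Set.Icc a b, advantage φ r (θ T) y = η
      ∧ ∀ t ∈ Set.Icc a T, η ≤ advantage φ r (θ t) y := by
  obtain ⟨T, hT, hAT⟩ := intermediate_value_Icc' hab
    (fun t ht => (h.hasDerivAt_advantage ht y).continuousAt.continuousWithinAt) hη
  exact ⟨T, hT, hAT, fun t ht =>
    hAT.symm.trans_le (h.antitoneOn_advantage y ⟨ht.1, ht.2.trans hT.2⟩ hT ht.2)⟩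

end IsGradientFlowOn

-- Read `u`, `v` and `-ρ` as the logit velocities of `y_⋆`, of `y_med` and (on average) of `Y_bad`,
-- and `p`, `m`, `b` as their probabilities.
lemma sub_mean_add_mul_le {p m b u v ρ E W κ : ℝ} (hp : 0 ≤ p) (hm : 0 ≤ m) (hb : 0 ≤ b)
    (hsum : p + m + b = 1) (hp_le : p ≤ 0.028) (hb_le : b ≤ 0.1) (hκ : κ ∈ Set.Icc (0 : ℝ) (2 / 7))
    (hE : 0 ≤ E) (hW : 0 ≤ W) (hu : u ≤ W) (hv : m * E - W ≤ v) (hρ : ρ ≤ E + W) :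
    u - (1 - κ) * (p * u + m * v - b * ρ) + κ * ρ ≤ 2.4 * W - 0.15 * E := by
  obtain ⟨hκ0, hκ_le⟩ := hκ
  have hstar : (1 - (1 - κ) * p) * u ≤ 1 * W := by
    have : 0 ≤ 1 - (1 - κ) * p := by nlinarith
    have : 1 - (1 - κ) * p ≤ 1 := by nlinarith
    calc (1 - (1 - κ) * p) * u ≤ (1 - (1 - κ) * p) * W := by gcongr
      _ ≤ 1 * W := by gcongr
  have hmed : (1 - κ) * m * (m * E - v) ≤ 1 * W := by
    have : 0 ≤ (1 - κ) * m := mul_nonneg (by linarith) hm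
    have : (1 - κ) * m ≤ 1 := by nlinarith
    calc (1 - κ) * m * (m * E - v) ≤ (1 - κ) * m * W := by gcongr; linarith
      _ ≤ 1 * W := by gcongr
  have hmed_sq : 5 / 7 * 0.76 * E ≤ (1 - κ) * m ^ 2 * E := by
    have : 0.76 ≤ m ^ 2 := by nlinarith
    have : 5 / 7 ≤ 1 - κ := by linarith
    gcongr
  have hbad : ((1 - κ) * b + κ) * ρ ≤ 0.36 * (E + W) := by
    have : 0 ≤ (1 - κ) * b + κ := add_nonneg (mul_nonneg (by linarith) hb) hκ0
    calc ((1 - κ) * b + κ) * ρ ≤ ((1 - κ) * b + κ) * (E + W) := by gcongr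
      _ ≤ 0.36 * (E + W) := by gcongr; nlinarith
  linarith

/-- The reward structure assumption: the outputs are `ystar`, `ymed` and the nonempty set `Ybad`,
and the reward drops by `Δ1` from `ystar` to `ymed` and by `Δ2` from `ymed` to `Ybad`. -/
structure RewardTiers {Y : Type*} (r : Y → ℝ) (ystar ymed : Y) (Ybad : Finset Y)
    (Δ1 Δ2 : ℝ) : Prop where
  star_ne_med : ystar ≠ ymed
  star_notMem_bad : ystar ∉ Ybad
  med_notMem_bad : ymed ∉ Ybad
  bad_nonempty : Ybad.Nonempty
  cover : ∀ y, y = ystar ∨ y = ymed ∨ y ∈ Ybad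
  reward_star : r ystar = r ymed + Δ1
  reward_bad : ∀ y ∈ Ybad, r y = r ymed - Δ2
  Δ1_pos : 0 < Δ1
  Δ2_pos : 0 < Δ2

/-- The negative-inner-product feature assumption, with `⟨φ(y_⋆), φ(y_med)⟩ = 0` allowed. -/
structure NegInnerFeatures {Y : Type*} {D : ℕ} (φ : Y → EuclideanSpace ℝ (Fin D))
    (ystar ymed : Y) (Ybad : Finset Y) : Prop where
  med_ne_zero : φ ymed ≠ 0
  inner_star_med : ⟪φ ystar, φ ymed⟫ ≤ 0
  inner_bad : ∀ yb ∈ Ybad, ∀ y, y ≠ yb → ⟪φ yb, φ y⟫ = 0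
  norm_bad_le : ∀ yb ∈ Ybad, ‖φ yb‖ ≤ ‖φ ymed‖

namespace RewardTiers

section Advantage

variable {Y : Type*} [Fintype Y] {D : ℕ} {r : Y → ℝ} {ystar ymed : Y} {Ybad : Finset Y}
  {Δ1 Δ2 : ℝ} (hr : RewardTiers r ystar ymed Ybad Δ1 Δ2)

include hr

lemma sum_eq (f : Y → ℝ) : ∑ y, f y = f ystar + f ymed + ∑ y ∈ Ybad, f y := by
  classical
  have huniv : Finset.univ = insert ystar (insert ymed Ybad) := by
    ext y
    simpa using hr.cover y
  rw [huniv, Finset.sum_insert (by simp [hr.star_ne_med, hr.star_notMem_bad]),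
    Finset.sum_insert hr.med_notMem_bad, add_assoc]

variable (φ : Y → EuclideanSpace ℝ (Fin D)) (θ : EuclideanSpace ℝ (Fin D))

lemma policy_add_policyMass :
    policy φ θ ystar + policy φ θ ymed + policyMass φ θ Ybad = 1 := by
  have : Nonempty Y := ⟨ystar⟩
  rw [← sum_policy φ θ, hr.sum_eq, policyMass]

lemma advantage_star : advantage φ r θ ystar = advantage φ r θ ymed + Δ1 := by
  rw [advantage, advantage, hr.reward_star]
  ring

lemma advantage_bad {y : Y} (hy : y ∈ Ybad) :
    advantage φ r θ y = advantage φ r θ ymed - Δ2 := by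
  rw [advantage, advantage, hr.reward_bad y hy]
  ring

lemma sum_bad_policy_mul_advantage :
    ∑ y ∈ Ybad, policy φ θ y * advantage φ r θ y
      = -(policyMass φ θ Ybad * (Δ2 - advantage φ r θ ymed)) := by
  rw [Finset.sum_congr rfl fun y hy => by rw [hr.advantage_bad φ θ hy], ← Finset.sum_mul,
    policyMass]
  ring

lemma advantage_med :
    advantage φ r θ ymed = policyMass φ θ Ybad * Δ2 - policy φ θ ystar * Δ1 := by
  have : Nonempty Y := ⟨ystar⟩
  have hzero := sum_policy_mul_advantage φ r θ
  rw [hr.sum_eq, hr.advantage_star, hr.sum_bad_policy_mul_advantage] at hzero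
  linear_combination hzero - advantage φ r θ ymed * hr.policy_add_policyMass φ θ

lemma advantage_med_le : advantage φ r θ ymed ≤ Δ2 := by
  have : Nonempty Y := ⟨ystar⟩
  have hstar := mul_nonneg (policy_pos φ θ ystar).le hr.Δ1_pos.le
  have hmass : policyMass φ θ Ybad * Δ2 ≤ 1 * Δ2 := by
    have := hr.Δ2_pos
    gcongr
    linarith [hr.policy_add_policyMass φ θ, policy_pos φ θ ystar, policy_pos φ θ ymed]
  linarith [hr.advantage_med φ θ]

lemma advantage_star_pos : 0 < advantage φ r θ ystar := by
  have : Nonempty Y := ⟨ystar⟩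
  have hmed := mul_pos (policy_pos φ θ ymed) hr.Δ1_pos
  have hbad := mul_pos (policyMass_pos φ θ hr.bad_nonempty) (add_pos hr.Δ1_pos hr.Δ2_pos)
  linear_combination hmed + hbad - hr.advantage_star φ θ - hr.advantage_med φ θ
    + Δ1 * hr.policy_add_policyMass φ θ

-- The advantages have mean zero, so their absolute values sum to twice the contribution of `Ybad`.
lemma sum_policy_mul_abs_advantage (hA : 0 ≤ advantage φ r θ ymed) :
    ∑ y, policy φ θ y * |advantage φ r θ y|
      = 2 * (policyMass φ θ Ybad * (Δ2 - advantage φ r θ ymed)) := by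
  have : Nonempty Y := ⟨ystar⟩
  have hbad : ∑ y ∈ Ybad, policy φ θ y * |advantage φ r θ y|
      = -∑ y ∈ Ybad, policy φ θ y * advantage φ r θ y := by
    rw [← Finset.sum_neg_distrib]
    refine Finset.sum_congr rfl fun y hy => ?_
    rw [abs_of_nonpos, mul_neg]
    linarith [hr.advantage_bad φ θ hy, hr.advantage_med_le φ θ]
  have hzero := sum_policy_mul_advantage φ r θ
  rw [hr.sum_eq, hr.sum_bad_policy_mul_advantage] at hzero
  rw [hr.sum_eq, hbad, hr.sum_bad_policy_mul_advantage, abs_of_nonneg hA, abs_of_nonneg]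
  · linarith
  · linarith [hr.advantage_star φ θ, hr.Δ1_pos]

lemma norm_gradient_sq_le {B : ℝ} (hB : ∀ y, ‖φ y‖ ≤ B) (hA : 0 ≤ advantage φ r θ ymed) :
    ‖gradient (expReward φ r) θ‖ ^ 2
      ≤ 4 * B ^ 2 * (advantage φ r θ ymed + policy φ θ ystar * Δ1) ^ 2 := by
  have : Nonempty Y := ⟨ystar⟩
  have hB0 : 0 ≤ B := (norm_nonneg _).trans (hB ystar)
  have hmass := (policyMass_pos φ θ hr.bad_nonempty).le
  calc ‖gradient (expReward φ r) θ‖ ^ 2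
      ≤ (B * (2 * (policyMass φ θ Ybad * (Δ2 - advantage φ r θ ymed)))) ^ 2 := by
        rw [← hr.sum_policy_mul_abs_advantage φ θ hA]
        gcongr
        exact norm_gradient_expReward_le φ r θ hB
    _ ≤ (B * (2 * (policyMass φ θ Ybad * Δ2))) ^ 2 := by
        have := sub_nonneg.2 (hr.advantage_med_le φ θ)
        gcongr
        linarith
    _ = 4 * B ^ 2 * (advantage φ r θ ymed + policy φ θ ystar * Δ1) ^ 2 := by
        rw [hr.advantage_med]
        ring

end Advantage

section Growth

variable {Y : Type*} [Fintype Y] {D : ℕ} {r : Y → ℝ} {ystar ymed : Y} {Ybad : Finset Y}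
  {Δ1 Δ2 : ℝ} (hr : RewardTiers r ystar ymed Ybad Δ1 Δ2)

include hr

variable {φ : Y → EuclideanSpace ℝ (Fin D)} (hf : NegInnerFeatures φ ystar ymed Ybad)
  (θ : EuclideanSpace ℝ (Fin D))

include hf

lemma logitVelocity_of_notMem_bad {y : Y} (hy : y ∉ Ybad) :
    logitVelocity φ r θ y
      = policy φ θ ystar * (advantage φ r θ ymed + Δ1) * ⟪φ y, φ ystar⟫
        + policy φ θ ymed * advantage φ r θ ymed * ⟪φ y, φ ymed⟫ := by
  have : Nonempty Y := ⟨ystar⟩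
  have hbad : ∑ z ∈ Ybad, policy φ θ z * advantage φ r θ z * ⟪φ y, φ z⟫ = 0 :=
    Finset.sum_eq_zero fun z hz => by
      rw [real_inner_comm, hf.inner_bad z hz y (ne_of_mem_of_not_mem hz hy).symm, mul_zero]
  rw [logitVelocity_eq_sum, hr.sum_eq, hbad, hr.advantage_star, add_zero]

lemma logitVelocity_bad {y : Y} (hy : y ∈ Ybad) :
    logitVelocity φ r θ y
      = -(policy φ θ y * (Δ2 - advantage φ r θ ymed) * ‖φ y‖ ^ 2) := by
  have : Nonempty Y := ⟨ystar⟩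
  rw [logitVelocity_eq_sum, Finset.sum_eq_single_of_mem y (Finset.mem_univ y),
    hr.advantage_bad φ θ hy, real_inner_self_eq_norm_sq]
  · ring
  · exact fun z _ hz => by rw [hf.inner_bad y hy z hz, mul_zero]

variable {B : ℝ} (hB : ∀ y, ‖φ y‖ ≤ B)

include hB in
lemma le_logitVelocity_med :
    policy φ θ ymed * (‖φ ymed‖ ^ 2 * advantage φ r θ ymed)
      - policy φ θ ystar * (B ^ 2 * (Δ1 + Δ2)) ≤ logitVelocity φ r θ ymed := by
  have : Nonempty Y := ⟨ystar⟩
  have hstar := (policy_pos φ θ ystar).le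
  have hA_le := hr.advantage_med_le φ θ
  have hΔ := hr.Δ1_pos
  have hΔ' := hr.Δ2_pos
  have hinner_nonneg : 0 ≤ -⟪φ ymed, φ ystar⟫ := by
    rw [real_inner_comm]
    exact neg_nonneg.2 hf.inner_star_med
  have hinner_le : -⟪φ ymed, φ ystar⟫ ≤ B ^ 2 :=
    calc -⟪φ ymed, φ ystar⟫ ≤ ‖φ ymed‖ * ‖φ ystar‖ :=
          (neg_le_abs _).trans (abs_real_inner_le_norm _ _)
      _ ≤ B ^ 2 := by
          rw [sq]
          gcongr
          exacts [(norm_nonneg _).trans (hB ymed), hB ymed, hB ystar]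
  have hcross : policy φ θ ystar * (advantage φ r θ ymed + Δ1) * -⟪φ ymed, φ ystar⟫
      ≤ policy φ θ ystar * (Δ2 + Δ1) * B ^ 2 := by
    gcongr
  rw [hr.logitVelocity_of_notMem_bad hf θ hr.med_notMem_bad, real_inner_self_eq_norm_sq]
  linarith

variable (hA : 0 ≤ advantage φ r θ ymed)

include hA

include hB in
lemma logitVelocity_star_le :
    logitVelocity φ r θ ystar ≤ policy φ θ ystar * (B ^ 2 * (Δ1 + Δ2)) := by
  have : Nonempty Y := ⟨ystar⟩
  have hstar := (policy_pos φ θ ystar).le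
  have hmed : policy φ θ ymed * advantage φ r θ ymed * ⟪φ ystar, φ ymed⟫ ≤ 0 :=
    mul_nonpos_of_nonneg_of_nonpos (mul_nonneg (policy_pos φ θ ymed).le hA) hf.inner_star_med
  have hA_le := hr.advantage_med_le φ θ
  have hΔ := hr.Δ1_pos
  have hΔ' := hr.Δ2_pos
  calc logitVelocity φ r θ ystar
      ≤ policy φ θ ystar * (advantage φ r θ ymed + Δ1) * ‖φ ystar‖ ^ 2 := by
        rw [hr.logitVelocity_of_notMem_bad hf θ hr.star_notMem_bad, real_inner_self_eq_norm_sq]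
        linarith
    _ ≤ policy φ θ ystar * (Δ2 + Δ1) * B ^ 2 := by
        gcongr
        exact hB ystar
    _ = policy φ θ ystar * (B ^ 2 * (Δ1 + Δ2)) := by ring

lemma neg_sum_bad_policy_mul_logitVelocity_le :
    -∑ y ∈ Ybad, policy φ θ y * logitVelocity φ r θ y
      ≤ policyMass φ θ Ybad
        * (‖φ ymed‖ ^ 2 * (advantage φ r θ ymed + policy φ θ ystar * Δ1)) := by
  have : Nonempty Y := ⟨ystar⟩
  have hterm {y : Y} (hy : y ∈ Ybad) : -(policy φ θ y * logitVelocity φ r θ y)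
      ≤ policy φ θ y * (policyMass φ θ Ybad * Δ2 * ‖φ ymed‖ ^ 2) := by
    have hpos := (policy_pos φ θ y).le
    have hΔ := hr.Δ2_pos
    have hmass := (policyMass_pos φ θ hr.bad_nonempty).le
    have hsub := sub_nonneg.2 (hr.advantage_med_le φ θ)
    rw [hr.logitVelocity_bad hf θ hy, mul_neg, neg_neg]
    gcongr
    · exact policy_le_policyMass φ θ hy
    · linarith
    · exact hf.norm_bad_le y hy
  rw [← Finset.sum_neg_distrib]
  refine (Finset.sum_le_sum fun y hy => hterm hy).trans_eq ?_
  rw [← Finset.sum_mul, ← policyMass, hr.advantage_med]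
  ring

-- The left side is the logarithmic derivative of `π(y_⋆) / π(Y_bad) ^ κ` under gradient flow.
include hB in
lemma advantage_logitVelocity_star_le {κ : ℝ} (hκ : κ ∈ Set.Icc (0 : ℝ) (2 / 7))
    (hstar : policy φ θ ystar ≤ 0.028) (hbad : policyMass φ θ Ybad ≤ 0.1) :
    advantage φ (logitVelocity φ r θ) θ ystar
        - κ * ((∑ y ∈ Ybad, policy φ θ y * advantage φ (logitVelocity φ r θ) θ y)
          / policyMass φ θ Ybad)
      ≤ 2.4 * (policy φ θ ystar * (B ^ 2 * (Δ1 + Δ2)))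
        - 0.15 * (‖φ ymed‖ ^ 2 * advantage φ r θ ymed) := by
  have : Nonempty Y := ⟨ystar⟩
  have hmass := policyMass_pos φ θ hr.bad_nonempty
  have hΔ := hr.Δ1_pos
  have hΔ' := hr.Δ2_pos
  have hp := policy_pos φ θ ystar
  set ρ := (-∑ y ∈ Ybad, policy φ θ y * logitVelocity φ r θ y) / policyMass φ θ Ybad with hρ
  have hmean : expReward φ (logitVelocity φ r θ) θ
      = policy φ θ ystar * logitVelocity φ r θ ystar + policy φ θ ymed * logitVelocity φ r θ ymed
        - policyMass φ θ Ybad * ρ := by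
    rw [expReward, hr.sum_eq, hρ, mul_div_cancel₀ _ hmass.ne', sub_neg_eq_add]
  have hmean_bad : (∑ y ∈ Ybad, policy φ θ y * advantage φ (logitVelocity φ r θ) θ y)
      / policyMass φ θ Ybad = -ρ - expReward φ (logitVelocity φ r θ) θ := by
    simp only [advantage, mul_sub, Finset.sum_sub_distrib, ← Finset.sum_mul]
    rw [← policyMass, hρ]
    field_simp
  have hρ_le : ρ ≤ ‖φ ymed‖ ^ 2 * advantage φ r θ ymed
      + policy φ θ ystar * (B ^ 2 * (Δ1 + Δ2)) := by
    rw [hρ, div_le_iff₀' hmass]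
    refine (hr.neg_sum_bad_policy_mul_logitVelocity_le hf θ hA).trans ?_
    have : policy φ θ ystar * (‖φ ymed‖ ^ 2 * Δ1)
        ≤ policy φ θ ystar * (B ^ 2 * (Δ1 + Δ2)) := by
      gcongr
      exacts [hB ymed, by linarith]
    gcongr
    linarith
  have hmain := sub_mean_add_mul_le hp.le (policy_pos φ θ ymed).le hmass.le
    (hr.policy_add_policyMass φ θ) hstar hbad hκ (by positivity) (by positivity)
    (hr.logitVelocity_star_le hf θ hB hA) (hr.le_logitVelocity_med hf θ hB) hρ_le
  rw [← hmean] at hmain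
  rw [hmean_bad, advantage]
  linarith

end Growth

section Dynamics

variable {Y : Type*} [Fintype Y] {D : ℕ} {r : Y → ℝ} {ystar ymed : Y} {Ybad : Finset Y}
  {Δ1 Δ2 : ℝ} {φ : Y → EuclideanSpace ℝ (Fin D)} {θ : ℝ → EuclideanSpace ℝ (Fin D)}
  {B a b η κ : ℝ}

lemma policyMass_bad_le_of_le (hr : RewardTiers r ystar ymed Ybad Δ1 Δ2)
    {θ θ' : EuclideanSpace ℝ (Fin D)} (hA : advantage φ r θ ymed ≤ advantage φ r θ' ymed)
    (hstar : policy φ θ ystar ≤ policy φ θ' ystar) :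
    policyMass φ θ Ybad ≤ policyMass φ θ' Ybad := by
  have := mul_le_mul_of_nonneg_right hstar hr.Δ1_pos.le
  exact le_of_mul_le_mul_right
    (by linarith [hr.advantage_med φ θ, hr.advantage_med φ θ']) hr.Δ2_pos

variable (hr : RewardTiers r ystar ymed Ybad Δ1 Δ2) (hf : NegInnerFeatures φ ystar ymed Ybad)
  (hB : ∀ y, ‖φ y‖ ≤ B) (hθ : IsGradientFlowOn φ r θ (Set.Icc a b))

include hr hf hB hθ

section LargeAdvantage

variable (hη : 0 < η) (hA : ∀ t ∈ Set.Icc a b, η ≤ advantage φ r (θ t) ymed)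
  (hstar : policy φ (θ a) ystar ≤ 0.014)
  (hsmall : 50 * (policy φ (θ a) ystar * (B ^ 2 * (Δ1 + Δ2))) ≤ ‖φ ymed‖ ^ 2 * η)
  (hbad : policyMass φ (θ a) Ybad ≤ 0.1)

include hη hA hstar hsmall hbad

lemma advantage_logitVelocity_star_neg (hκ : κ ∈ Set.Icc (0 : ℝ) (2 / 7)) {t : ℝ}
    (ht : t ∈ Set.Icc a b) (hle : policy φ (θ t) ystar ≤ policy φ (θ a) ystar) :
    advantage φ (logitVelocity φ r (θ t)) (θ t) ystar
      - κ * ((∑ y ∈ Ybad, policy φ (θ t) y * advantage φ (logitVelocity φ r (θ t)) (θ t) y)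
        / policyMass φ (θ t) Ybad) < 0 := by
  have : Nonempty Y := ⟨ystar⟩
  have hΔ1 := hr.Δ1_pos
  have hΔ2 := hr.Δ2_pos
  have hAt := hA t ht
  have hbad_le := hr.policyMass_bad_le_of_le
    (hθ.antitoneOn_advantage ymed (Set.left_mem_Icc.2 (ht.1.trans ht.2)) ht ht.1) hle
  have hdecay : ‖φ ymed‖ ^ 2 * η ≤ ‖φ ymed‖ ^ 2 * advantage φ r (θ t) ymed := by gcongr
  have hgrowth : policy φ (θ t) ystar * (B ^ 2 * (Δ1 + Δ2))
      ≤ policy φ (θ a) ystar * (B ^ 2 * (Δ1 + Δ2)) := by gcongr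
  have hpos : 0 < ‖φ ymed‖ ^ 2 * η := mul_pos (pow_pos (norm_pos_iff.2 hf.med_ne_zero) 2) hη
  have hrate := hr.advantage_logitVelocity_star_le hf (θ t) hB (hη.le.trans hAt) hκ (by linarith)
    (hbad_le.trans hbad)
  linarith

lemma policy_star_le_of_le_advantage_med {t : ℝ} (ht : t ∈ Set.Icc a b) :
    policy φ (θ t) ystar ≤ policy φ (θ a) ystar := by
  have : Nonempty Y := ⟨ystar⟩
  refine image_le_of_deriv_right_lt_deriv_boundary (B := fun _ => policy φ (θ a) ystar)
    (B' := fun _ => 0)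
    (fun x hx => (hθ.hasDerivAt_policy hx ystar).continuousAt.continuousWithinAt)
    (fun x hx => (hθ.hasDerivAt_policy (Set.Ico_subset_Icc_self hx) ystar).hasDerivWithinAt)
    le_rfl (fun x => hasDerivAt_const x _) (fun x hx hle => ?_) ht
  have hneg := hr.advantage_logitVelocity_star_neg hf hB hθ hη hA hstar hsmall hbad
    (κ := 0) (by norm_num) (Set.Ico_subset_Icc_self hx) hle.le
  rw [zero_mul, sub_zero] at hneg
  exact mul_neg_of_pos_of_neg (policy_pos φ _ ystar) hneg

lemma policy_star_le_mul_rpow_policyMass_bad (hab : a ≤ b) (hκ : κ ∈ Set.Icc (0 : ℝ) (2 / 7)) :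
    policy φ (θ b) ystar
      ≤ policy φ (θ a) ystar * (policyMass φ (θ b) Ybad / policyMass φ (θ a) Ybad) ^ κ := by
  have : Nonempty Y := ⟨ystar⟩
  refine le_mul_div_rpow_of_logDeriv_le hab (fun t ht => hθ.hasDerivAt_policy ht ystar)
    (fun t ht => hθ.hasDerivAt_policyMass ht Ybad) (fun t _ => policy_pos φ (θ t) ystar)
    (fun t _ => policyMass_pos φ (θ t) hr.bad_nonempty) fun t ht => ?_
  rw [mul_div_cancel_left₀ _ (policy_pos φ (θ t) ystar).ne']
  exact (hr.advantage_logitVelocity_star_neg hf hB hθ hη hA hstar hsmall hbad hκ ht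
    (hr.policy_star_le_of_le_advantage_med hf hB hθ hη hA hstar hsmall hbad ht)).le

end LargeAdvantage

section SmallAdvantage

variable (hA : ∀ t ∈ Set.Icc a b, 0 ≤ advantage φ r (θ t) ymed)
  (hstar : policy φ (θ a) ystar ≤ 0.014)
  (hstar_le : 2 * policy φ (θ a) ystar * (Δ1 + Δ2) ≤ advantage φ r (θ a) ymed)
  (hA_le : 2 * advantage φ r (θ a) ymed ≤ 0.1 * Δ2)

include hA hstar hstar_le hA_le

lemma policy_star_le_two_mul
    (hlen : 16 * (B ^ 2 * (Δ1 + Δ2)) * policy φ (θ a) ystar * (b - a) < 1)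
    {t : ℝ} (ht : t ∈ Set.Icc a b) :
    policy φ (θ t) ystar ≤ 2 * policy φ (θ a) ystar := by
  have : Nonempty Y := ⟨ystar⟩
  have hΔ1 := hr.Δ1_pos
  have hΔ2 := hr.Δ2_pos
  have hpos := policy_pos φ (θ a) ystar
  have : 0 ≤ B ^ 2 * (Δ1 + Δ2) * policy φ (θ a) ystar * (b - a) := by
    have : 0 ≤ b - a := sub_nonneg.2 (ht.1.trans ht.2)
    positivity
  refine le_two_mul_of_hasDerivAt_le_sq (k := 2.4 * (B ^ 2 * (Δ1 + Δ2)))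
    (fun x hx => hθ.hasDerivAt_policy hx ystar) hpos (by positivity) (fun x hx hle => ?_)
    (by linarith) ht
  have hbad : policyMass φ (θ x) Ybad ≤ 0.1 := by
    have hmono := hθ.antitoneOn_advantage ymed (Set.left_mem_Icc.2 (hx.1.trans hx.2)) hx hx.1
    have hstar_mul : policy φ (θ x) ystar * Δ1 ≤ 2 * policy φ (θ a) ystar * (Δ1 + Δ2) := by
      gcongr
      linarith
    refine le_of_mul_le_mul_right ?_ hΔ2
    linarith [hr.advantage_med φ (θ x)]
  have hrate := hr.advantage_logitVelocity_star_le hf (θ x) hB (hA x hx) (κ := 0) (by norm_num)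
    (by linarith) hbad
  have hdecay := mul_nonneg (sq_nonneg ‖φ ymed‖) (hA x hx)
  calc policy φ (θ x) ystar * advantage φ (logitVelocity φ r (θ x)) (θ x) ystar
      ≤ policy φ (θ x) ystar * (2.4 * (policy φ (θ x) ystar * (B ^ 2 * (Δ1 + Δ2)))) := by
        have := (policy_pos φ (θ x) ystar).le
        gcongr
        linarith
    _ = 2.4 * (B ^ 2 * (Δ1 + Δ2)) * policy φ (θ x) ystar ^ 2 := by ring

-- `2 p (Δ1 + Δ2)` is added to the advantage of `y_med` to absorb the contribution of `y_⋆` to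
-- `∇V`; the sum then obeys `f' ≥ -C f ^ 2` and has to fall by a factor of at least two.
lemma one_le_mul_of_advantage_med_eq_zero (hab : a ≤ b)
    (hAb : advantage φ r (θ b) ymed = 0) :
    1 ≤ 16 * (B ^ 2 * (Δ1 + Δ2)) * policy φ (θ a) ystar * (b - a) := by
  by_contra! hlen
  have : Nonempty Y := ⟨ystar⟩
  have hΔ1 := hr.Δ1_pos
  have hΔ2 := hr.Δ2_pos
  have hpos := policy_pos φ (θ a) ystar
  set w := 2 * policy φ (θ a) ystar * (Δ1 + Δ2) with hw
  have hw_pos : 0 < w := by positivity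
  have hinv := inv_le_inv_add_of_neg_sq_le_hasDerivAt (k := 4 * B ^ 2) hab
    (fun t ht => (hθ.hasDerivAt_advantage ht ymed).add_const w)
    (fun t ht => by linarith [hA t ht]) fun t ht => by
      have hAt := hA t ht
      have hstar_mul : policy φ (θ t) ystar * Δ1 ≤ w := by
        have := hr.policy_star_le_two_mul hf hB hθ hA hstar hstar_le hA_le hlen ht
        rw [hw]
        gcongr
        linarith
      refine neg_le_neg ((hr.norm_gradient_sq_le φ (θ t) hB hAt).trans ?_)
      have := mul_nonneg (policy_pos φ (θ t) ystar).le hΔ1.le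
      gcongr
  rw [hAb, zero_add] at hinv
  have hinv_start : (advantage φ r (θ a) ymed + w)⁻¹ ≤ (2 * w)⁻¹ := by
    gcongr
    linarith
  have htime : w⁻¹ - (2 * w)⁻¹ ≤ 4 * B ^ 2 * (b - a) := by linarith
  have hhalf : w⁻¹ - (2 * w)⁻¹ = 1 / (2 * w) := by
    field_simp
    norm_num
  rw [hhalf, div_le_iff₀ (by positivity)] at htime
  rw [hw] at htime
  linarith

end SmallAdvantage

lemma one_le_mul_of_advantage_med_nonpos (hab : a ≤ b)
    (hη : 0 < η) (hstar : policy φ (θ a) ystar ≤ 0.014)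
    (hsmall : 50 * (policy φ (θ a) ystar * (B ^ 2 * (Δ1 + Δ2))) ≤ ‖φ ymed‖ ^ 2 * η)
    (hη_le : 2 * η ≤ policyMass φ (θ a) Ybad * Δ2) (hbad : policyMass φ (θ a) Ybad ≤ 0.1)
    (hκ : κ ∈ Set.Icc (0 : ℝ) (2 / 7)) (hAb : advantage φ r (θ b) ymed ≤ 0) :
    1 ≤ 16 * (B ^ 2 * (Δ1 + Δ2))
      * (policy φ (θ a) ystar * (1.14 * η / Δ2 / policyMass φ (θ a) Ybad) ^ κ) * (b - a) := by
  have : Nonempty Y := ⟨ystar⟩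
  have hΔ1 := hr.Δ1_pos
  have hΔ2 := hr.Δ2_pos
  have hpos := policy_pos φ (θ a) ystar
  have hstar_le : 50 * (policy φ (θ a) ystar * (Δ1 + Δ2)) ≤ η := by
    have hB_sq : 0 < B ^ 2 := pow_pos ((norm_pos_iff.2 hf.med_ne_zero).trans_le (hB ymed)) 2
    have : ‖φ ymed‖ ^ 2 * η ≤ B ^ 2 * η := by
      gcongr
      exact hB ymed
    exact le_of_mul_le_mul_left (by linarith) hB_sq
  have hstar_mul : 0 ≤ policy φ (θ a) ystar * Δ2 := by positivity
  obtain ⟨T, hT, hAT, hA_large⟩ := hθ.exists_advantage_eq ymed hab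
    (show η ∈ _ from ⟨hAb.trans hη.le, by linarith [hr.advantage_med φ (θ a)]⟩)
  have hθ_large := hθ.mono (Set.Icc_subset_Icc_right hT.2)
  obtain ⟨T', hT', hAT', hA_small⟩ := (hθ.mono (Set.Icc_subset_Icc_left hT.1)).exists_advantage_eq
    ymed hT.2 (show (0 : ℝ) ∈ _ from ⟨hAb, hη.le.trans_eq hAT.symm⟩)
  have hθ_small := hθ.mono (Set.Icc_subset_Icc hT.1 hT'.2)
  have hfall := hr.policy_star_le_mul_rpow_policyMass_bad hf hB hθ_large hη hA_large hstar hsmall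
    hbad hT.1 hκ
  have hstar_T := hr.policy_star_le_of_le_advantage_med hf hB hθ_large hη hA_large hstar hsmall hbad
    (Set.right_mem_Icc.2 hT.1)
  have hstar_T_mul : policy φ (θ T) ystar * (Δ1 + Δ2) ≤ policy φ (θ a) ystar * (Δ1 + Δ2) := by
    gcongr
  have htime := hr.one_le_mul_of_advantage_med_eq_zero hf hB hθ_small hA_small
    (hstar_T.trans hstar) (by linarith) (by rw [hAT]; exact hη_le.trans (by gcongr)) hT'.1 hAT'
  have hbad_T : policyMass φ (θ T) Ybad ≤ 1.14 * η / Δ2 := by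
    have : 0 ≤ policy φ (θ T) ystar * Δ2 := mul_nonneg (policy_pos φ (θ T) ystar).le hΔ2.le
    rw [le_div_iff₀ hΔ2]
    linarith [hr.advantage_med φ (θ T)]
  refine htime.trans ?_
  have := hκ.1
  have := policyMass_pos φ (θ a) hr.bad_nonempty
  have := policyMass_pos φ (θ T) hr.bad_nonempty
  have : 0 ≤ T' - T := sub_nonneg.2 hT'.1
  gcongr ?_ * ?_ * ?_
  · exact hfall.trans (by gcongr)
  · linarith [hT.1, hT'.2]

end Dynamics

end RewardTiers

section InitialConstants

lemma le_mul_rpow_one_sub_of_le_rpow_inv {x y k : ℝ} (hx : 0 < x) (hy : 0 ≤ y) (hk : 0 < k)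
    (h : x ≤ y ^ k⁻¹) : x ≤ y * x ^ (1 - k) :=
  calc x = x ^ k * x ^ (1 - k) := by
        rw [← Real.rpow_add hx, add_sub_cancel, Real.rpow_one]
    _ ≤ y * x ^ (1 - k) := by
        gcongr
        exact (Real.le_rpow_inv_iff_of_pos hx.le hy hk).1 h

lemma rpow_thirteen_fourteenths_le : (0.01 : ℝ) ^ ((13 : ℝ) / 14) ≤ 0.014 := by
  have h : (0.01 : ℝ) ^ (13 : ℝ) ≤ 0.014 ^ (14 : ℝ) := by norm_num
  rw [div_eq_mul_inv, Real.rpow_mul (by norm_num)]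
  exact (Real.rpow_inv_le_iff_of_pos (by positivity) (by norm_num) (by norm_num)).2 h

lemma le_and_le_mul_rpow_of_le_min {x y : ℝ} (hx : 0 < x) (hy : 0 ≤ y)
    (h : x ≤ (min 0.01 (y ^ ((7 : ℝ) / 3))) ^ ((13 : ℝ) / 14)) :
    x ≤ 0.014 ∧ x ≤ y * x ^ ((7 : ℝ) / 13) := by
  have : 0 ≤ min 0.01 (y ^ ((7 : ℝ) / 3)) := le_min (by norm_num) (by positivity)
  refine ⟨h.trans (le_trans ?_ rpow_thirteen_fourteenths_le), ?_⟩
  · gcongr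
    exact min_le_left _ _
  · have hle : x ≤ y ^ ((6 : ℝ) / 13)⁻¹ :=
      calc x ≤ (y ^ ((7 : ℝ) / 3)) ^ ((13 : ℝ) / 14) := h.trans (by gcongr; exact min_le_right _ _)
        _ = y ^ ((6 : ℝ) / 13)⁻¹ := by rw [← Real.rpow_mul hy]; norm_num
    have := le_mul_rpow_one_sub_of_le_rpow_inv hx hy (by norm_num) hle
    norm_num at this
    exact this

lemma mul_rpow_one_seventh_le {M c Q ρ : ℝ} (hQ : 0 < Q) (hc : 0 ≤ c) (hρ : 0 < ρ)
    (hM : M ≤ c * ρ ^ ((2 : ℝ) / 7) / (40 * Q)) :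
    16 * Q * (M * (26 / ρ ^ 2) ^ ((1 : ℝ) / 7)) ≤ c := by
  have hroot : (26 : ℝ) ^ ((1 : ℝ) / 7) ≤ 2.5 := by
    rw [one_div, Real.rpow_inv_le_iff_of_pos (by norm_num) (by norm_num) (by norm_num)]
    norm_num
  have hsplit : (26 / ρ ^ 2) ^ ((1 : ℝ) / 7) = 26 ^ ((1 : ℝ) / 7) / ρ ^ ((2 : ℝ) / 7) := by
    rw [Real.div_rpow (by norm_num) (by positivity), ← Real.rpow_natCast_mul hρ.le]
    norm_num
  calc 16 * Q * (M * (26 / ρ ^ 2) ^ ((1 : ℝ) / 7))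
      ≤ 16 * Q * (c * ρ ^ ((2 : ℝ) / 7) / (40 * Q) * (2.5 / ρ ^ ((2 : ℝ) / 7))) := by
        rw [hsplit]
        gcongr
    _ = c := by
        field_simp
        ring

lemma ratio_rpow_le {η δ β ρ κ : ℝ} (hη : 0 ≤ η) (hρ : 0 < ρ) (hδ : ρ ≤ δ) (hβ : 0.05 * ρ ≤ β)
    (hκ : 0 ≤ κ) : (1.14 * η / δ / β) ^ κ ≤ (26 / ρ ^ 2) ^ κ * η ^ κ := by
  have hδ_pos := hρ.trans_le hδ
  have hβ_pos : 0 < β := by linarith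
  rw [← Real.mul_rpow (by positivity) hη]
  gcongr
  calc 1.14 * η / δ / β ≤ 1.14 * η / ρ / (0.05 * ρ) := by gcongr
    _ = 22.8 / ρ ^ 2 * η := by field_simp; ring
    _ ≤ 26 / ρ ^ 2 * η := by gcongr; norm_num

lemma rpow_mul_rpow_neg {x y : ℝ} (hx : 0 ≤ x) (hy : 0 ≤ y) (k : ℝ) :
    x ^ k * y ^ (-k) = ((y / x) ^ k)⁻¹ := by
  rw [Real.div_rpow hy hx, inv_div, Real.rpow_neg hy, div_eq_mul_inv]

lemma le_of_one_le_mul_ratio_rpow {M c Q D ρ δ β α p t : ℝ} (hQ : 0 < Q) (hc : 0 ≤ c) (hcQ : c ≤ Q)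
    (hρ : 0 < ρ) (hρD : ρ ≤ D) (hδ : ρ ≤ δ) (hβ : 0.05 * ρ ≤ β) (hα : 0 ≤ α) (hM : 0 < M)
    (hM_le : M ≤ c * ρ ^ ((2 : ℝ) / 7) / (40 * Q * D)) (hp : 0 < p) (ht : 0 ≤ t)
    (h : 1 ≤ 16 * (Q * D)
      * (p * (1.14 * (p / M) ^ ((7 : ℝ) / 13) / δ / β) ^ (1 / 7 + 13 * α / 7)) * t) :
    ρ * M ^ ((14 : ℝ) / 13 + α) / (4 * Q * D * (26 / ρ ^ 2) ^ (13 * α / 7))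
      * p ^ (-(14 : ℝ) / 13 - α) ≤ t := by
  have hD := hρ.trans_le hρD
  have hx : 0 < p / M := div_pos hp hM
  set F := (26 / ρ ^ 2) ^ (13 * α / 7) with hF
  set X := (p / M) ^ ((14 : ℝ) / 13 + α) with hX
  have hF_pos : 0 < F := Real.rpow_pos_of_pos (by positivity) _
  have hX_pos : 0 < X := Real.rpow_pos_of_pos hx _
  have hpow : p * ((p / M) ^ ((7 : ℝ) / 13)) ^ (1 / 7 + 13 * α / 7) = M * X := by
    have hexp : (14 : ℝ) / 13 + α = 1 + 7 / 13 * (1 / 7 + 13 * α / 7) := by ring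
    rw [← Real.rpow_mul hx.le, hX, hexp, Real.rpow_add hx, Real.rpow_one]
    field_simp
  have hmain : 1 ≤ Q * F * X * t :=
    calc 1 ≤ 16 * (Q * D) * (p * ((26 / ρ ^ 2) ^ (1 / 7 + 13 * α / 7)
            * ((p / M) ^ ((7 : ℝ) / 13)) ^ (1 / 7 + 13 * α / 7))) * t := by
          refine h.trans ?_
          gcongr
          exact ratio_rpow_le (by positivity) hρ hδ hβ (by positivity)
      _ = 16 * (Q * D) * (M * (26 / ρ ^ 2) ^ ((1 : ℝ) / 7)) * F * X * t := by
          rw [mul_left_comm p, hpow, Real.rpow_add (by positivity), ← hF]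
          ring
      _ ≤ Q * F * X * t := by
          gcongr
          exact (mul_rpow_one_seventh_le (mul_pos hQ hD) hc hρ (by rwa [← mul_assoc])).trans hcQ
  have hinv : M ^ ((14 : ℝ) / 13 + α) * p ^ (-(14 : ℝ) / 13 - α) = X⁻¹ := by
    rw [hX, ← rpow_mul_rpow_neg hM.le hp.le]
    ring_nf
  calc ρ * M ^ ((14 : ℝ) / 13 + α) / (4 * Q * D * F) * p ^ (-(14 : ℝ) / 13 - α)
      = ρ / (4 * Q * D * F) * (M ^ ((14 : ℝ) / 13 + α) * p ^ (-(14 : ℝ) / 13 - α)) := by ring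
    _ = ρ / (4 * Q * D * F * X) := by rw [hinv]; field_simp
    _ ≤ t := by
      rw [div_le_iff₀ (by positivity)]
      calc ρ ≤ D * 1 := by rwa [mul_one]
        _ ≤ D * (Q * F * X * t) := by gcongr
        _ ≤ t * (4 * Q * D * F * X) := by
          have : 0 ≤ D * (Q * F * X * t) := by positivity
          linarith

end InitialConstants

lemma neg_div_mem_Icc {c s : ℝ} (hc : 0 ≤ c) (hs : s < 0) :
    -s / (26 * (c - s / 2)) ∈ Set.Icc (0 : ℝ) (1 / 13) := by
  have hden : 0 < 26 * (c - s / 2) := by linarith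
  refine ⟨div_nonneg (by linarith) hden.le, ?_⟩
  rw [div_le_div_iff₀ hden (by norm_num)]
  linarith

theorem slow_opt_neg_inner_general {Y : Type*} [Fintype Y] {D : ℕ}
    {φ : Y → EuclideanSpace ℝ (Fin D)} {r : Y → ℝ} {ystar ymed : Y} {Ybad : Finset Y} {Δ1 Δ2 : ℝ}
    (hr : RewardTiers r ystar ymed Ybad Δ1 Δ2) (hf : NegInnerFeatures φ ystar ymed Ybad)
    (hmed_pos : 0 < r ymed) (hmed_le : r ymed ≤ Δ2)
    {θ : ℝ → EuclideanSpace ℝ (Fin D)} {t : ℝ} (ht : 0 ≤ t)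
    (hθ : IsGradientFlowOn φ r θ (Set.Icc 0 t)) {B M : ℝ} (hB : ∀ y, ‖φ y‖ ≤ B)
    (hM : M ≤ min 1 (‖φ ymed‖ ^ 2 * r ymed ^ ((2 : ℝ) / 7) / (40 * B ^ 2 * (Δ1 + Δ2))))
    (hstar : policy φ (θ 0) ystar
      ≤ M * (min 0.01 ((21 * ‖φ ymed‖ ^ 2 / (1100 * B ^ 2 * (Δ1 + Δ2))) ^ ((7 : ℝ) / 3)))
        ^ ((13 : ℝ) / 14))
    (hbad : max (2 * policy φ (θ 0) ystar ^ ((7 : ℝ) / 13) / (Δ2 * M ^ ((7 : ℝ) / 13)))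
      (0.05 * r ymed) ≤ policyMass φ (θ 0) Ybad)
    (hbad_le : policyMass φ (θ 0) Ybad ≤ 0.1) {α : ℝ} (hα : α ∈ Set.Icc (0 : ℝ) (1 / 13))
    (hV : r ymed ≤ expReward φ r (θ t)) :
    r ymed * M ^ ((14 : ℝ) / 13 + α)
        / (4 * B ^ 2 * (Δ1 + Δ2) * (26 / r ymed ^ 2) ^ (13 * α / 7))
      * policy φ (θ 0) ystar ^ (-(14 : ℝ) / 13 - α) ≤ t := by
  have : Nonempty Y := ⟨ystar⟩
  obtain ⟨hα_nonneg, hα_le⟩ := hα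
  obtain ⟨hM_le_one, hM_le⟩ := le_min_iff.1 hM
  obtain ⟨hbad_ge, hbad_ge'⟩ := max_le_iff.1 hbad
  have hΔ1 := hr.Δ1_pos
  have hΔ2 := hr.Δ2_pos
  have hp := policy_pos φ (θ 0) ystar
  have hB_pos : 0 < B := (norm_pos_iff.2 hf.med_ne_zero).trans_le (hB ymed)
  have hM_pos : 0 < M := pos_of_mul_pos_left (hp.trans_le hstar) (by positivity)
  set x := policy φ (θ 0) ystar / M with hx
  have hx_pos : 0 < x := div_pos hp hM_pos
  have hp_le : policy φ (θ 0) ystar ≤ x := le_div_self hp.le hM_pos hM_le_one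
  obtain ⟨hx_le, hx_le_mul⟩ := le_and_le_mul_rpow_of_le_min hx_pos
    (y := 21 * ‖φ ymed‖ ^ 2 / (1100 * B ^ 2 * (Δ1 + Δ2))) (by positivity)
    ((div_le_iff₀' hM_pos).2 hstar)
  have hη_le : 2 * x ^ ((7 : ℝ) / 13) ≤ policyMass φ (θ 0) Ybad * Δ2 := by
    rw [hx, Real.div_rpow hp.le hM_pos.le, ← div_le_iff₀ hΔ2]
    exact le_of_eq_of_le (by ring) hbad_ge
  have hsmall : 50 * (policy φ (θ 0) ystar * (B ^ 2 * (Δ1 + Δ2)))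
      ≤ ‖φ ymed‖ ^ 2 * x ^ ((7 : ℝ) / 13) := by
    have hc : 0 ≤ ‖φ ymed‖ ^ 2 * x ^ ((7 : ℝ) / 13) := by positivity
    rw [div_mul_eq_mul_div, le_div_iff₀ (by positivity)] at hx_le_mul
    have : policy φ (θ 0) ystar * (B ^ 2 * (Δ1 + Δ2)) ≤ x * (B ^ 2 * (Δ1 + Δ2)) := by gcongr
    linarith
  have htime := hr.one_le_mul_of_advantage_med_nonpos hf hB hθ ht (by positivity)
    (hp_le.trans hx_le) hsmall hη_le hbad_le (κ := 1 / 7 + 13 * α / 7)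
    ⟨by positivity, by linarith⟩ (sub_nonpos.2 hV)
  rw [sub_zero] at htime
  refine le_of_one_le_mul_ratio_rpow (pow_pos hB_pos 2) (sq_nonneg _) ?_ hmed_pos
    (by linarith) hmed_le hbad_ge' hα_nonneg hM_pos hM_le hp ht htime
  gcongr
  exact hB ymed

theorem slow_opt_neg_inner {Y : Type*} [Fintype Y] {D : ℕ}
    (φ : Y → EuclideanSpace ℝ (Fin D)) (hφ : ∀ y, φ y ≠ 0)
    (rG : Y → ℝ) (hrG : ∀ y, rG y ∈ Set.Icc (-1 : ℝ) 1)
    (ystar ymed ybad : Y) (Ybad : Finset Y) (hybad : ybad ∈ Ybad)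
    (hsm : ystar ≠ ymed) (hsb : ystar ∉ Ybad) (hmb : ymed ∉ Ybad)
    (hcover : ∀ y : Y, y = ystar ∨ y = ymed ∨ y ∈ Ybad)
    (hr1 : rG ymed < rG ystar) (hr2 : 0 < rG ymed)
    (hr3 : ∀ y ∈ Ybad, rG y ≤ 0)
    (hr4 : ∀ y ∈ Ybad, rG y = rG ybad)
    (Δ1 Δ2 : ℝ) (hΔ1 : Δ1 = rG ystar - rG ymed) (hΔ2 : Δ2 = rG ymed - rG ybad)
    (s : ℝ) (hs : s = ⟪φ ystar, φ ymed⟫) (hsneg : s < 0)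
    (horthbad : ∀ yb ∈ Ybad, ∀ y : Y, y ≠ yb → ⟪φ yb, φ y⟫ = 0)
    (hnormbad : ∀ yb ∈ Ybad, ‖φ yb‖ ≤ ‖φ ymed‖)
    (θt : ℝ → EuclideanSpace ℝ (Fin D))
    (hflow : ∀ t : ℝ, 0 ≤ t → HasDerivAt θt (gradient (expReward φ rG) (θt t)) t)
    (B M' : ℝ)
    (hB : B = Finset.univ.sup' ⟨ystar, Finset.mem_univ ystar⟩ fun y => ‖φ y‖)
    (hM' : M' = min 1 (‖φ ymed‖ ^ 2 * rG ymed ^ ((2:ℝ)/7) / (40 * B ^ 2 * (Δ1 + Δ2))))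
    (hinit1 : policy φ (θt 0) ystar
        < min (M' * (min 0.01 ((21 * ‖φ ymed‖ ^ 2 / (1100 * B ^ 2 * (Δ1 + Δ2))) ^ ((7:ℝ)/3))) ^ ((13:ℝ)/14))
            (‖φ ymed‖ / ‖φ ystar‖ * policy φ (θt 0) ymed))
    (hinit2 : max (2 * policy φ (θt 0) ystar ^ ((7:ℝ)/13) / (Δ2 * M' ^ ((7:ℝ)/13)))
        (0.05 * rG ymed) ≤ ∑ y ∈ Ybad, policy φ (θt 0) y)
    (hinit3 : ∑ y ∈ Ybad, policy φ (θt 0) y ≤ 0.1 * rG ymed)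
    (α K : ℝ)
    (hα : α = -s / (26 * (‖φ ymed‖ ^ 2 - s / 2)))
    (hK : K = (26 / rG ymed ^ 2) ^ (13 * α / 7)
        * (1 + ‖φ ymed‖ ^ 2 * policy φ (θt 0) ymed ^ 2
            / (8 * (‖φ ystar‖ ^ 2 - s) * (rG ystar - expReward φ rG (θt 0)))))
    (ε : ℝ) (hε : ε ∈ Set.Ioo 0 Δ1)
    (t : ℝ) (ht : 0 ≤ t)
    (hV : rG ystar - ε ≤ expReward φ rG (θt t)) :
    rG ymed * M' ^ ((14:ℝ)/13 + α) * (1 - Real.exp (-(2 * (Δ1 - ε))))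
        / (4 * B ^ 2 * (Δ1 + Δ2) * K)
        * policy φ (θt 0) ystar ^ (-(14:ℝ)/13 - α) ≤ t := by
  have hr : RewardTiers rG ystar ymed Ybad Δ1 Δ2 :=
    ⟨hsm, hsb, hmb, ⟨ybad, hybad⟩, hcover, by linarith, fun y hy => by linarith [hr4 y hy],
      by linarith, by linarith [hr3 ybad hybad]⟩
  have hf : NegInnerFeatures φ ystar ymed Ybad := ⟨hφ ymed, by linarith, horthbad, hnormbad⟩
  have hB_le (y) : ‖φ y‖ ≤ B := hB ▸ Finset.le_sup' (fun y => ‖φ y‖) (Finset.mem_univ y)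
  have htime := slow_opt_neg_inner_general hr hf hr2 (by linarith [hr3 ybad hybad]) ht
    (fun x hx => hflow x hx.1) hB_le hM'.le (hinit1.le.trans (min_le_left _ _)) hinit2
    (hinit3.trans (by linarith [(hrG ymed).2])) (hα ▸ neg_div_mem_Icc (sq_nonneg _) hsneg)
    (by linarith [hε.2])
  have hK_ge : (26 / rG ymed ^ 2) ^ (13 * α / 7) ≤ K := by
    have hstar_pos : 0 < rG ystar - expReward φ rG (θt 0) := hr.advantage_star_pos φ (θt 0)
    have hnorm_sub : 0 < ‖φ ystar‖ ^ 2 - s := by linarith [sq_nonneg ‖φ ystar‖]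
    exact hK ▸ le_mul_of_one_le_right (by positivity) (le_add_of_nonneg_right (by positivity))
  have hΔ1_pos := hr.Δ1_pos
  have hΔ2_pos := hr.Δ2_pos
  have hB_pos : 0 < B := (norm_pos_iff.2 (hφ ymed)).trans_le (hB_le ymed)
  have hM'_nonneg : 0 ≤ M' := hM' ▸ le_min zero_le_one (by positivity)
  have hp := (@policy_pos _ _ _ φ (θt 0) ⟨ystar⟩ ystar).le
  have hfactor : rG ymed * M' ^ ((14 : ℝ) / 13 + α) * (1 - Real.exp (-(2 * (Δ1 - ε))))
      ≤ rG ymed * M' ^ ((14 : ℝ) / 13 + α) :=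
    mul_le_of_le_one_right (by positivity) (sub_le_self _ (Real.exp_pos _).le)
  exact le_trans (by gcongr ?_ / (_ * ?_) * _) htime
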